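/- arXiv:1009.1365 — 2 statements merged into one kernel-verified Lean document; each statement's English description precedes it below -/
import Mathlib

section
/- There exist absolute constants C > 0 and K > 0 such that for every integer ν ≥ 0 and every real number x ≥ 3, the number of integers m with 2 ≤ m ≤ x satisfying ω(m) = ν + 1 is at most (K·x/log x)·(log log x + C)^ν / ν!. -/
/-!
This is the Hardy–Ramanujan inequality, proved by induction on `ν`.

Call a prime power `q` an exact divisor of `m` if `q ∣ m` and `q` is coprime to `m / q`. If
`ω m = k + 1` and `m ≤ N`, then at most one of the `k + 1` exact prime power divisors of `m` exceeds
`√N`, because the product of any two of them divides `m`. Counting pairs `(m, q)` with `q ≤ √N`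
therefore gives (`card_primeFactors_mul_le_sum`)
`k · #{m ≤ N : ω m = k + 1} ≤ ∑_{q ≤ √N} #{m ≤ N / q : ω m = k}`.
Inserting the induction hypothesis for each `N / q` leaves the sum `∑ 1 / (q log (x / q))` over prime
powers `q ≤ √x`, which must be at most `(log log x + C) / log x` (`sum_one_div_mul_log_le`). In that
range `1 / log (x / q) ≤ (1 + 2 log q / log x) / log x`, so the bound follows from the upper halves
of Mertens' two theorems, with leading constant exactly `1`, and from the convergence of `∑ 1 / q`
over the proper prime powers. The case `ν = 0` is Chebyshev's bound for the number of prime powers.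
-/

namespace HardyRamanujan

open Finset ArithmeticFunction

/-! ### Mertens' upper bounds -/

/-- Upper half of Mertens' first theorem, for `Λ`. It comes from
`∑_{d ≤ n} Λ d ⌊n / d⌋ = log n! ≤ n log n` and Chebyshev's bound for `ψ n`, which absorbs the
rounding error. -/
lemma sum_vonMangoldt_div_le (n : ℕ) (hn : 1 ≤ n) :
    ∑ d ∈ Ioc 0 n, Λ d / d ≤ Real.log n + 6 := by
  have hn0 : (0 : ℝ) < n := by exact_mod_cast hn
  have h1 : ∑ m ∈ Ioc 0 n, Real.log m ≤ n * Real.log n := by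
    calc ∑ m ∈ Ioc 0 n, Real.log m ≤ ∑ m ∈ Ioc 0 n, Real.log n := by
          refine sum_le_sum fun m hm => ?_
          rw [mem_Ioc] at hm
          exact Real.log_le_log (by exact_mod_cast hm.1) (by exact_mod_cast hm.2)
      _ = n * Real.log n := by simp
  have h2 : ∑ m ∈ Ioc 0 n, Real.log m = ∑ d ∈ Ioc 0 n, Λ d * ((n / d : ℕ) : ℝ) := by
    have := sum_Ioc_mul_zeta_eq_sum (R := ℝ) Λ n
    rw [vonMangoldt_mul_zeta] at this
    simpa [ArithmeticFunction.log_apply] using this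
  have h3 : ∑ d ∈ Ioc 0 n, Λ d ≤ 6 * n := by
    have := Chebyshev.psi_le_const_mul_self (x := n) hn0.le
    simp only [Chebyshev.psi, Nat.floor_natCast] at this
    have h4 : Real.log 4 ≤ 2 := by
      rw [show (4:ℝ) = 2 ^ 2 by norm_num, Real.log_pow]
      have := Real.log_two_lt_d9
      push_cast; linarith
    nlinarith
  have h4 : ∑ d ∈ Ioc 0 n, (n * (Λ d / d) - Λ d) ≤ ∑ d ∈ Ioc 0 n, Λ d * ((n / d : ℕ) : ℝ) := by
    refine sum_le_sum fun d hd => ?_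
    have : (n : ℝ) / d - 1 ≤ ((n / d : ℕ) : ℝ) := by
      rw [← Nat.floor_div_eq_div (K := ℝ)]
      exact (Nat.sub_one_lt_floor _).le
    calc (n * (Λ d / d) - Λ d : ℝ) = Λ d * ((n : ℝ) / d - 1) := by ring
      _ ≤ _ := mul_le_mul_of_nonneg_left this vonMangoldt_nonneg
  rw [sum_sub_distrib, ← mul_sum] at h4
  nlinarith

lemma sum_log_prime_div_le (n : ℕ) (hn : 1 ≤ n) :
    ∑ p ∈ Ioc 0 n with p.Prime, Real.log p / p ≤ Real.log n + 6 := by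
  refine le_trans ?_ (sum_vonMangoldt_div_le n hn)
  rw [sum_filter]
  refine sum_le_sum fun p _ => ?_
  split_ifs with hp
  · rw [vonMangoldt_apply_prime hp]
  · exact div_nonneg vonMangoldt_nonneg (by positivity)

/-- Partial summation in the form of a monotone quantity. With `A n = ∑_{p ≤ n} log p / p` and
`S n = ∑_{p ≤ n} 1 / p`, the expression `S n - (A n - 6) / log n - log log n` does not increase
with `n`, and at `n = 2` it equals `6 / log 2 - log log 2`. -/
lemma sum_inv_prime_aux (n : ℕ) (hn : 2 ≤ n) :
    ∑ p ∈ Ioc 0 n with p.Prime, (1 : ℝ) / p ≤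
      (∑ p ∈ Ioc 0 n with p.Prime, Real.log p / p) / Real.log n +
        Real.log (Real.log n) - 6 / Real.log n + (6 / Real.log 2 - Real.log (Real.log 2)) := by
  induction n, hn using Nat.le_induction with
  | base =>
    have : (Ioc 0 2).filter Nat.Prime = {2} := by decide
    rw [this]
    have := Real.log_pos (one_lt_two)
    simp only [sum_singleton]
    push_cast
    field_simp
    linarith
  | succ n hn ih =>
    have hA := sum_log_prime_div_le n (by omega)
    set A := ∑ p ∈ Ioc 0 n with p.Prime, Real.log p / p with hAdef
    have hl : 0 < Real.log n := Real.log_pos (by exact_mod_cast hn)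
    have hlt : Real.log n < Real.log (n + 1 : ℕ) :=
      Real.log_lt_log (by positivity) (by exact_mod_cast Nat.lt_succ_self n)
    have hl' := hl.trans hlt
    set u := Real.log n
    set v := Real.log (n + 1 : ℕ) with hv
    -- a new prime `n + 1` adds the same amount `1 / (n + 1)` to `S` and to `A / v`, so only the
    -- change of denominator from `u` to `v` matters
    have key : A / u - 6 / u + Real.log u ≤ A / v - 6 / v + Real.log v := by
      have h1 : 1 - u / v ≤ Real.log v - Real.log u := by
        have := Real.one_sub_inv_le_log_of_pos (div_pos hl' hl)
        rwa [inv_div, Real.log_div hl'.ne' hl.ne'] at this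
      have h2 : (A - 6) * (1 / u - 1 / v) ≤ u * (1 / u - 1 / v) :=
        mul_le_mul_of_nonneg_right (by linarith)
          (sub_nonneg.2 (one_div_le_one_div_of_le hl hlt.le))
      have h3 : u * (1 / u - 1 / v) = 1 - u / v := by field_simp
      have h4 : (A - 6) * (1 / u - 1 / v) = A / u - 6 / u - (A / v - 6 / v) := by ring
      linarith
    have hI : Ioc 0 (n + 1) = insert (n + 1) (Ioc 0 n) := by ext; simp; omega
    rw [hI, filter_insert]
    split_ifs with hp
    · rw [sum_insert (by simp), sum_insert (by simp), ← hAdef, ← hv, add_div]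
      have : v / (n + 1 : ℕ) / v = 1 / (n + 1 : ℕ) := by field_simp
      rw [this]
      linarith
    · linarith

/-- Upper half of Mertens' second theorem. -/
lemma sum_inv_prime_le : ∃ c : ℝ, 0 ≤ c ∧ ∀ n : ℕ, 2 ≤ n →
    ∑ p ∈ Ioc 0 n with p.Prime, (1 : ℝ) / p ≤ Real.log (Real.log n) + c := by
  have h2 : 0 < Real.log 2 := Real.log_pos one_lt_two
  have h2' : Real.log (Real.log 2) ≤ 0 :=
    Real.log_nonpos h2.le (by linarith [Real.log_two_lt_d9])
  refine ⟨1 + (6 / Real.log 2 - Real.log (Real.log 2)), by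
    have : 0 < 6 / Real.log 2 := by positivity
    linarith, fun n hn => ?_⟩
  have h := sum_inv_prime_aux n hn
  have hA := sum_log_prime_div_le n (by omega)
  have hl : 0 < Real.log n := Real.log_pos (by exact_mod_cast hn)
  have := div_le_div_of_nonneg_right hA hl.le
  rw [add_div, div_self hl.ne'] at this
  linarith

/-! ### Prime powers -/

/-- The reciprocals of the proper prime powers have bounded sum: for `k ≥ 2`,
`p ^ (-k) ≤ 4 · 2 ^ (-k) · p ^ (-2)`, and both factors are summable. -/
lemma sum_inv_proper_primePow_le (n : ℕ) :
    ∑ q ∈ Ioc 0 n with IsPrimePow q, (if q.Prime then 0 else (1 : ℝ) / q) ≤ 16 := by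
  have h := Chebyshev.sum_PrimePow_eq_sum_sum (fun q : ℕ => if q.Prime then 0 else (1 : ℝ) / q)
    (x := n) (by positivity)
  simp only [Nat.floor_natCast] at h
  rw [h]
  set N := ⌊Real.log n / Real.log 2⌋₊
  have h1 : ∀ k ∈ Icc 1 N, ∑ p ∈ Ioc 0 ⌊(n : ℝ) ^ ((1 : ℝ) / k)⌋₊ with p.Prime,
      (if (p ^ k).Prime then 0 else (1 : ℝ) / (p ^ k : ℕ)) ≤
      ∑ p ∈ Ioc 0 n, 4 * (1 / 2) ^ k * ((p : ℝ) ^ 2)⁻¹ := by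
    intro k hk
    rw [mem_Icc] at hk
    refine (sum_le_sum (g := fun p : ℕ => 4 * (1 / 2) ^ k * ((p : ℝ) ^ 2)⁻¹) ?_).trans
      (sum_le_sum_of_subset_of_nonneg ?_ ?_)
    · intro p hp
      simp only [mem_filter, mem_Ioc] at hp
      split_ifs with hpk
      · positivity
      · obtain ⟨j, rfl⟩ : ∃ j, k = j + 2 := by
          refine ⟨k - 2, ?_⟩
          have : k ≠ 1 := by
            rintro rfl
            exact hpk (by simpa using hp.2)
          omega
        have hp2 : (2 : ℝ) ≤ p := by exact_mod_cast hp.2.two_le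
        have : (1 / (p : ℝ)) ^ j ≤ (1 / 2) ^ j := by gcongr
        calc (1 : ℝ) / (p ^ (j + 2) : ℕ) = (1 / (p : ℝ)) ^ j * ((p : ℝ) ^ 2)⁻¹ := by
              push_cast
              rw [pow_add, one_div_pow]
              field_simp
          _ ≤ (1 / 2) ^ j * ((p : ℝ) ^ 2)⁻¹ := by gcongr
          _ = _ := by ring
    · intro p hp
      simp only [mem_filter, mem_Ioc] at hp ⊢
      refine ⟨hp.1.1, ?_⟩
      have hp1 : 1 ≤ p := hp.1.1
      have h2 := Nat.floor_le (show (0:ℝ) ≤ (n : ℝ) ^ ((1 : ℝ) / k) by positivity)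
      have h3 : (p : ℝ) ≤ (n : ℝ) ^ ((1 : ℝ) / k) := le_trans (by exact_mod_cast hp.1.2) h2
      have hn : (1 : ℝ) ≤ n := by
        rcases Nat.eq_zero_or_pos n with rfl | hn
        · have : (1 : ℝ) / k ≠ 0 := by
            have : (k : ℝ) ≠ 0 := by exact_mod_cast (by omega : k ≠ 0)
            positivity
          rw [Nat.cast_zero, Real.zero_rpow this] at h3
          have : (1 : ℝ) ≤ p := by exact_mod_cast hp1
          linarith
        · exact_mod_cast hn
      have h4 : (n : ℝ) ^ ((1 : ℝ) / k) ≤ n := by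
        conv_rhs => rw [← Real.rpow_one (n : ℝ)]
        refine Real.rpow_le_rpow_of_exponent_le hn ?_
        rw [div_le_one (by exact_mod_cast hk.1)]
        exact_mod_cast hk.1
      exact_mod_cast h3.trans h4
    · intro p _ _; positivity
  refine (sum_le_sum h1).trans ?_
  simp_rw [← mul_sum]
  rw [← sum_mul, ← mul_sum]
  have h2 : ∑ k ∈ Icc 1 N, ((1 : ℝ) / 2) ^ k ≤ 2 := by
    refine le_trans ?_ (sum_geometric_two_le (N + 1))
    refine sum_le_sum_of_subset_of_nonneg ?_ fun _ _ _ => by positivity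
    intro k hk
    rw [mem_Icc] at hk
    rw [mem_range]; omega
  have h3 : ∑ p ∈ Ioc 0 n, ((p : ℝ) ^ 2)⁻¹ ≤ 2 := by
    have := sum_Ioo_inv_sq_le (α := ℝ) 0 (n + 1)
    rw [show Ioo 0 (n + 1) = Ioc 0 n by ext; simp only [mem_Ioo, mem_Ioc]; omega] at this
    simpa using this
  have h4 : 0 ≤ ∑ p ∈ Ioc 0 n, ((p : ℝ) ^ 2)⁻¹ := sum_nonneg fun _ _ => by positivity
  have h5 : 0 ≤ ∑ k ∈ Icc 1 N, ((1 : ℝ) / 2) ^ k := sum_nonneg fun _ _ => by positivity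
  nlinarith

/-- Chebyshev's bound for prime powers: there are at most `√x` `k`-th powers of primes up to `x` for
each of the at most `log x / log 2` exponents `k ≥ 2`. -/
lemma card_primePow_le : ∃ K : ℝ, 0 < K ∧ ∀ x : ℝ, 2 ≤ x →
    (((Ioc 0 ⌊x⌋₊).filter IsPrimePow).card : ℝ) ≤ K * x / Real.log x := by
  have hl2 : 0 < Real.log 2 := Real.log_pos one_lt_two
  have hl4 : 0 < Real.log 4 := Real.log_pos (by norm_num)
  refine ⟨2 * Real.log 4 + 2 + 16 / Real.log 2, by positivity, fun x hx => ?_⟩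
  have hx0 : 0 < x := by linarith
  have hL : 0 < Real.log x := Real.log_pos (by linarith)
  have h := Chebyshev.sum_PrimePow_eq_sum_sum (fun _ : ℕ => (1 : ℝ)) (x := x) hx0.le
  simp only [sum_const, nsmul_eq_mul, mul_one] at h
  rw [h]
  set N := ⌊Real.log x / Real.log 2⌋₊
  have hN : (N : ℝ) ≤ Real.log x / Real.log 2 := Nat.floor_le (by positivity)
  have hN1 : 1 ≤ N := by
    rw [Nat.one_le_floor_iff, one_le_div hl2]
    exact Real.log_le_log two_pos hx
  have hsq : 1 ≤ √x := Real.one_le_sqrt.2 (by linarith)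
  have hk : ∀ k ∈ Ioc 1 N, (((Ioc 0 ⌊x ^ ((1 : ℝ) / k)⌋₊).filter Nat.Prime).card : ℝ) ≤ √x := by
    intro k hk
    rw [mem_Ioc] at hk
    calc (((Ioc 0 ⌊x ^ ((1 : ℝ) / k)⌋₊).filter Nat.Prime).card : ℝ)
        ≤ ⌊x ^ ((1 : ℝ) / k)⌋₊ := by
          have := card_filter_le (Ioc 0 ⌊x ^ ((1 : ℝ) / k)⌋₊) Nat.Prime
          rw [Nat.card_Ioc, Nat.sub_zero] at this
          exact_mod_cast this
      _ ≤ x ^ ((1 : ℝ) / k) := Nat.floor_le (by positivity)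
      _ ≤ x ^ ((1 : ℝ) / 2) := by
          refine Real.rpow_le_rpow_of_exponent_le (by linarith) ?_
          exact one_div_le_one_div_of_le two_pos (by exact_mod_cast hk.1)
      _ = √x := (Real.sqrt_eq_rpow x).symm
  have hpi : (((Ioc 0 ⌊x ^ ((1 : ℝ) / (1 : ℕ))⌋₊).filter Nat.Prime).card : ℝ) ≤
      Real.log 4 * x / (Real.log x / 2) + √x := by
    have := Chebyshev.pi_le_log4_mul_div (x := x) (by linarith)
    rw [Real.log_sqrt hx0.le] at this
    rw [Nat.cast_one, div_one, Real.rpow_one]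
    convert this using 2
    rw [← Nat.primesLE_card_eq_primeCounting]
    congr 1
    ext p
    simp only [mem_filter, mem_Ioc, Nat.mem_primesLE]
    exact ⟨fun h => ⟨h.1.2, h.2⟩, fun h => ⟨⟨h.2.pos, h.1⟩, h.2⟩⟩
  rw [← add_sum_Ioc_eq_sum_Icc hN1]
  have hsum := sum_le_sum hk
  rw [sum_const, nsmul_eq_mul, Nat.card_Ioc] at hsum
  have hN' : ((N - 1 : ℕ) : ℝ) ≤ Real.log x / Real.log 2 :=
    le_trans (by exact_mod_cast Nat.sub_le _ _) hN
  have hsum' : ∑ k ∈ Ioc 1 N, (((Ioc 0 ⌊x ^ ((1 : ℝ) / k)⌋₊).filter Nat.Prime).card : ℝ) ≤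
      Real.log x / Real.log 2 * √x := hsum.trans (by gcongr)
  -- `log x = 4 log (x ^ (1/4)) ≤ 4 x ^ (1/4)`, so that `(log x) ^ 2 ≤ 16 √x`
  have hs2 : √x * √x = x := Real.mul_self_sqrt hx0.le
  have hr2 : √(√x) * √(√x) = √x := Real.mul_self_sqrt (Real.sqrt_nonneg x)
  have hlog1 : Real.log x ≤ 2 * √x := by
    have := Real.log_le_self (Real.sqrt_nonneg x)
    rw [Real.log_sqrt hx0.le] at this
    linarith
  have hlog2 : Real.log x ≤ 4 * √(√x) := by
    have := Real.log_le_self (Real.sqrt_nonneg √x)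
    rw [Real.log_sqrt (Real.sqrt_nonneg x), Real.log_sqrt hx0.le] at this
    linarith
  have hlog3 : Real.log x * Real.log x ≤ 16 * √x := by
    have := mul_le_mul hlog2 hlog2 hL.le (by positivity)
    nlinarith
  have e1 : √x ≤ 2 * x / Real.log x := by
    rw [le_div_iff₀ hL]
    nlinarith
  have e2 : Real.log x / Real.log 2 * √x ≤ 16 / Real.log 2 * x / Real.log x := by
    rw [le_div_iff₀ hL]
    calc Real.log x / Real.log 2 * √x * Real.log x
        = (Real.log x * Real.log x) * √x / Real.log 2 := by ring
      _ ≤ (16 * √x) * √x / Real.log 2 := by gcongr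
      _ = 16 / Real.log 2 * (√x * √x) := by ring
      _ = _ := by rw [hs2]
  calc _ ≤ (Real.log 4 * x / (Real.log x / 2) + √x) + Real.log x / Real.log 2 * √x :=
        add_le_add hpi hsum'
    _ ≤ (Real.log 4 * x / (Real.log x / 2) + 2 * x / Real.log x)
          + 16 / Real.log 2 * x / Real.log x := by gcongr
    _ = _ := by field_simp

/-! ### Removing a prime power -/

/-- If `ω m = k + 1` and `m ≤ N`, then `m` has at least `k` exact prime power divisors `q ≤ √N`, and
each quotient `m / q` satisfies `ω (m / q) = k`. -/
lemma card_primeFactors_mul_le_sum (k N : ℕ) (hk : 1 ≤ k) :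
    k * ((Icc 2 N).filter fun m => m.primeFactors.card = k + 1).card ≤
      ∑ q ∈ (Ioc 0 N.sqrt).filter IsPrimePow,
        ((Icc 2 (N / q)).filter fun m => m.primeFactors.card = k).card := by
  classical
  set S := (Icc 2 N).filter fun m => m.primeFactors.card = k + 1 with hS
  set Q := (Ioc 0 N.sqrt).filter IsPrimePow with hQ
  -- `R m q`: the number `q` is an exact divisor of `m`
  let R : ℕ → ℕ → Prop := fun m q => q ∣ m ∧ Nat.Coprime q (m / q)
  have hlow : ∀ m ∈ S, k ≤ (Q.filter fun q => R m q).card := by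
    intro m hm
    simp only [hS, mem_filter, mem_Icc] at hm
    obtain ⟨⟨hm2, hmN⟩, hcard⟩ := hm
    have hm0 : m ≠ 0 := by omega
    -- two exact prime power divisors above `√N` would have a product exceeding `N`
    have hbig : (m.primeFactors.filter fun p =>
        ¬ p ^ m.factorization p ≤ N.sqrt).card ≤ 1 := by
      rw [card_le_one]
      intro a ha b hb
      simp only [mem_filter, not_le] at ha hb
      by_contra hab
      have hpa := Nat.prime_of_mem_primeFactors ha.1
      have hpb := Nat.prime_of_mem_primeFactors hb.1
      have hdvd : a ^ m.factorization a * b ^ m.factorization b ∣ m :=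
        Nat.Coprime.mul_dvd_of_dvd_of_dvd
          (Nat.Coprime.pow _ _ ((Nat.coprime_primes hpa hpb).2 hab))
          (Nat.ordProj_dvd m a) (Nat.ordProj_dvd m b)
      have h1 := Nat.le_of_dvd (by omega) hdvd
      have h2 : (N.sqrt + 1) * (N.sqrt + 1) ≤
          a ^ m.factorization a * b ^ m.factorization b := Nat.mul_le_mul ha.2 hb.2
      have h3 := Nat.lt_succ_sqrt N
      simp only [Nat.succ_eq_add_one] at h3
      omega
    have hsplit := card_filter_add_card_filter_not (s := m.primeFactors)
      (fun p => p ^ m.factorization p ≤ N.sqrt)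
    have hk' : k ≤ (m.primeFactors.filter fun p => p ^ m.factorization p ≤ N.sqrt).card := by
      omega
    refine hk'.trans ?_
    refine card_le_card_of_injOn (fun p => p ^ m.factorization p) ?_ ?_
    · intro p hp
      simp only [coe_filter, Set.mem_ofPred_eq] at hp
      have hpp := Nat.prime_of_mem_primeFactors hp.1
      have hf : m.factorization p ≠ 0 :=
        (hpp.factorization_pos_of_dvd hm0 (Nat.dvd_of_mem_primeFactors hp.1)).ne'
      simp only [coe_filter, Set.mem_ofPred_eq, hQ, mem_filter, mem_Ioc, R]
      exact ⟨⟨⟨pow_pos hpp.pos _, hp.2⟩, hpp.isPrimePow.pow hf⟩, Nat.ordProj_dvd m p,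
        (Nat.coprime_ordCompl hpp hm0).pow_left _⟩
    · intro a ha b hb hab
      simp only [coe_filter, Set.mem_ofPred_eq] at ha hb
      have hpa := Nat.prime_of_mem_primeFactors ha.1
      have hpb := Nat.prime_of_mem_primeFactors hb.1
      have hf : m.factorization a ≠ 0 :=
        (hpa.factorization_pos_of_dvd hm0 (Nat.dvd_of_mem_primeFactors ha.1)).ne'
      have : a ∣ b ^ m.factorization b := by
        rw [← show a ^ m.factorization a = b ^ m.factorization b from hab]
        exact dvd_pow_self a hf
      exact (Nat.prime_dvd_prime_iff_eq hpa hpb).1 (hpa.dvd_of_dvd_pow this)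
  have hup : ∀ q ∈ Q, (S.filter fun m => R m q).card ≤
      ((Icc 2 (N / q)).filter fun m => m.primeFactors.card = k).card := by
    intro q hq
    simp only [hQ, mem_filter, mem_Ioc] at hq
    refine card_le_card_of_injOn (fun m => m / q) ?_ ?_
    · intro m hm
      simp only [hS, coe_filter, mem_filter, mem_Icc, Set.mem_ofPred_eq, R] at hm ⊢
      obtain ⟨⟨⟨hm2, hmN⟩, hcard⟩, hdvd, hcop⟩ := hm
      have hmul : q * (m / q) = m := Nat.mul_div_cancel' hdvd
      have hc := hcop.primeFactors_mul
      rw [hmul] at hc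
      have hq1 := isPrimePow_iff_card_primeFactors_eq_one.1 hq.2
      rw [hc, card_union_of_disjoint hcop.disjoint_primeFactors, hq1] at hcard
      have hk2 : (m / q).primeFactors.card = k := by omega
      refine ⟨⟨?_, Nat.div_le_div_right hmN⟩, hk2⟩
      by_contra hlt
      have := Nat.le_one_iff_eq_zero_or_eq_one.1 (Nat.lt_succ_iff.1 (not_le.1 hlt))
      have : (m / q).primeFactors.card = 0 := by
        rcases this with h | h <;> simp [h]
      omega
    · intro a ha b hb hab
      simp only [coe_filter, Set.mem_ofPred_eq, R] at ha hb
      rw [← Nat.mul_div_cancel' ha.2.1, ← Nat.mul_div_cancel' hb.2.1]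
      exact congrArg (q * ·) hab
  calc k * S.card = ∑ m ∈ S, k := by rw [sum_const, smul_eq_mul, mul_comm]
    _ ≤ ∑ m ∈ S, (Q.filter fun q => R m q).card := sum_le_sum hlow
    _ = ∑ q ∈ Q, (S.filter fun m => R m q).card :=
        sum_card_bipartiteAbove_eq_sum_card_bipartiteBelow R
    _ ≤ _ := sum_le_sum hup
/-! ### The induction -/

/-- The sum that arises when the bound for `x / q` is summed over the prime powers `q ≤ √x`. The
leading term `log log x` has coefficient `1`, so that the induction keeps the same `C`. -/
lemma sum_one_div_mul_log_le : ∃ C : ℝ, 1 ≤ C ∧ ∀ x : ℝ, 4 ≤ x →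
    ∑ q ∈ (Ioc 0 (Nat.sqrt ⌊x⌋₊)).filter IsPrimePow, 1 / (q * Real.log (x / q)) ≤
      (Real.log (Real.log x) + C) / Real.log x := by
  obtain ⟨c, hc0, hc⟩ := sum_inv_prime_le
  refine ⟨c + 45, by linarith, fun x hx => ?_⟩
  have hx0 : 0 < x := by linarith
  set s := Nat.sqrt ⌊x⌋₊ with hs
  have hs2 : 2 ≤ s := by
    rw [hs, Nat.le_sqrt]
    exact Nat.le_floor (by norm_num; linarith)
  have hsx : (s : ℝ) * s ≤ x := by
    have h1 : s * s ≤ ⌊x⌋₊ := Nat.sqrt_le _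
    have h2 := Nat.floor_le hx0.le
    have h3 : ((s * s : ℕ) : ℝ) ≤ ⌊x⌋₊ := by exact_mod_cast h1
    push_cast at h3
    linarith
  set L := Real.log x with hL
  have hL1 : 1 ≤ L := by
    have h1 : Real.log 4 ≤ L := Real.log_le_log (by norm_num) hx
    rw [show (4:ℝ) = 2 ^ 2 by norm_num, Real.log_pow] at h1
    have := Real.log_two_gt_d9
    push_cast at h1; linarith
  have hs0 : (0 : ℝ) < s := by exact_mod_cast (by omega : 0 < s)
  have hlogs : Real.log s ≤ L / 2 := by
    have := Real.log_le_log (by positivity) hsx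
    rw [Real.log_mul hs0.ne' hs0.ne'] at this
    linarith
  have hlogs0 : 0 < Real.log s := Real.log_pos (by exact_mod_cast hs2)
  -- primes need the precise factor `1 + 2 log q / L`; for proper prime powers, bounding it by `2`
  -- is enough
  have hterm : ∀ q ∈ (Ioc 0 s).filter IsPrimePow, 1 / (q * Real.log (x / q)) ≤
      1 / L * ((if q.Prime then (1 : ℝ) / q + 2 / L * (Real.log q / q) else 0) +
        2 * (if q.Prime then 0 else (1 : ℝ) / q)) := by
    intro q hq
    simp only [mem_filter, mem_Ioc] at hq
    have hq0 : (0 : ℝ) < q := by exact_mod_cast hq.1.1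
    have hlq : Real.log q ≤ L / 2 :=
      (Real.log_le_log hq0 (by exact_mod_cast hq.1.2)).trans hlogs
    have hlq0 : 0 ≤ Real.log q := Real.log_natCast_nonneg q
    rw [Real.log_div hx0.ne' hq0.ne', ← hL]
    have hpos : 0 < L - Real.log q := by linarith
    have h1 : 1 / (L - Real.log q) ≤ 1 / L * (1 + 2 / L * Real.log q) := by
      have e : 1 / L * (1 + 2 / L * Real.log q) = (L + 2 * Real.log q) / (L * L) := by
        field_simp
      rw [e, div_le_div_iff₀ hpos (by positivity)]
      nlinarith
    have h2 : 1 / L * (1 + 2 / L * Real.log q) ≤ 1 / L * 2 := by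
      have : 2 / L * Real.log q ≤ 1 := by
        rw [div_mul_eq_mul_div, div_le_one (by linarith)]; linarith
      gcongr; linarith
    have e1 : 1 / (q * (L - Real.log q)) = 1 / q * (1 / (L - Real.log q)) := by
      field_simp
    rw [e1]
    split_ifs
    · calc 1 / (q : ℝ) * (1 / (L - Real.log q))
          ≤ 1 / q * (1 / L * (1 + 2 / L * Real.log q)) := by gcongr
        _ = _ := by ring
    · calc 1 / (q : ℝ) * (1 / (L - Real.log q))
          ≤ 1 / q * (1 / L * 2) := by gcongr; exact h1.trans h2
        _ = _ := by ring
  refine (sum_le_sum hterm).trans ?_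
  rw [← mul_sum, sum_add_distrib, ← mul_sum]
  have hprime : ∑ q ∈ (Ioc 0 s).filter IsPrimePow,
      (if q.Prime then (1 : ℝ) / q + 2 / L * (Real.log q / q) else 0) =
      ∑ q ∈ Ioc 0 s with q.Prime, ((1 : ℝ) / q + 2 / L * (Real.log q / q)) := by
    rw [← sum_filter, filter_filter]
    congr 1
    ext q
    simp only [mem_filter, mem_Ioc]
    exact ⟨fun h => ⟨h.1, h.2.2⟩, fun h => ⟨h.1, h.2.isPrimePow, h.2⟩⟩
  rw [hprime, sum_add_distrib, ← mul_sum]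
  have hS := hc s hs2
  have hA := sum_log_prime_div_le s (by omega)
  have hP := sum_inv_proper_primePow_le s
  have hll : Real.log (Real.log s) ≤ Real.log L := Real.log_le_log hlogs0 (by linarith)
  have hA' : 2 / L * ∑ p ∈ Ioc 0 s with p.Prime, Real.log p / p ≤ 13 := by
    calc 2 / L * ∑ p ∈ Ioc 0 s with p.Prime, Real.log p / p
        ≤ 2 / L * (L / 2 + 6) := by gcongr; linarith
      _ = 1 + 12 / L := by field_simp; ring
      _ ≤ 13 := by
        have : 12 / L ≤ 12 := div_le_self (by norm_num) hL1
        linarith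
  rw [div_mul_eq_mul_div, one_mul]
  refine div_le_div_of_nonneg_right ?_ (by linarith)
  linarith

/-- The Hardy–Ramanujan inequality for `x ≥ 2`. This range is closed under the induction step, since
`x / q ≥ √x ≥ 2` whenever `q ≤ √x` and `x ≥ 4`. -/
theorem card_le : ∃ C : ℝ, 0 < C ∧ ∃ K : ℝ, 0 < K ∧ ∀ (ν : ℕ) (x : ℝ), 2 ≤ x →
    (((Icc 2 ⌊x⌋₊).filter fun m => m.primeFactors.card = ν + 1).card : ℝ) ≤
      K * x / Real.log x * (Real.log (Real.log x) + C) ^ ν / (Nat.factorial ν) := by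
  obtain ⟨C, hC, hsum⟩ := sum_one_div_mul_log_le
  obtain ⟨K, hK, hbase⟩ := card_primePow_le
  -- `log log y` is negative for `y < e`; `C ≥ 1` keeps the base of the power nonnegative
  have hnn : ∀ y : ℝ, 2 ≤ y → 0 ≤ Real.log (Real.log y) + C := by
    intro y hy
    have h0 : (1 : ℝ) / 2 ≤ Real.log y :=
      le_trans (by linarith [Real.log_two_gt_d9]) (Real.log_le_log two_pos hy)
    have h1 := Real.log_le_log (by norm_num) h0
    rw [one_div, Real.log_inv] at h1
    linarith [Real.log_two_lt_d9]
  refine ⟨C, by linarith, K, hK, fun ν => ?_⟩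
  induction ν with
  | zero =>
    intro x hx
    simp only [zero_add, pow_zero, Nat.factorial_zero, Nat.cast_one, mul_one, div_one]
    refine le_trans ?_ (hbase x hx)
    norm_cast
    refine card_le_card fun m hm => ?_
    simp only [mem_filter, mem_Icc, mem_Ioc] at hm ⊢
    exact ⟨⟨by omega, hm.1.2⟩, isPrimePow_iff_card_primeFactors_eq_one.2 hm.2⟩
  | succ ν ih =>
    intro x hx
    have hx0 : 0 < x := by linarith
    have hL : 0 < Real.log x := Real.log_pos (by linarith)
    have hD := hnn x hx
    have hcount := card_primeFactors_mul_le_sum (ν + 1) ⌊x⌋₊ (by omega)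
    set T := ((Icc 2 ⌊x⌋₊).filter fun m => m.primeFactors.card = ν + 1 + 1).card with hT
    set D := Real.log (Real.log x) + C with hDdef
    have hcount' : ((ν + 1 : ℕ) : ℝ) * T ≤
        K * x / Real.log x * D ^ (ν + 1) / (Nat.factorial ν) := by
      rcases lt_or_ge x 4 with hx4 | hx4
      · -- there is no prime power `q ≤ √x`, so both sides of `hcount` vanish
        have hfl : ⌊x⌋₊ < 4 := (Nat.floor_lt hx0.le).2 (by exact_mod_cast hx4)
        have hsq : Nat.sqrt ⌊x⌋₊ < 2 := Nat.sqrt_lt.2 (by omega)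
        have hemp : (Ioc 0 (Nat.sqrt ⌊x⌋₊)).filter IsPrimePow = ∅ := by
          rw [filter_eq_empty_iff]
          intro q hq hqp
          have := hqp.two_le
          rw [mem_Ioc] at hq
          omega
        rw [hemp, sum_empty] at hcount
        have : ((ν + 1 : ℕ) : ℝ) * T ≤ 0 := by exact_mod_cast hcount
        exact this.trans (by positivity)
      · have hterm : ∀ q ∈ (Ioc 0 (Nat.sqrt ⌊x⌋₊)).filter IsPrimePow,
            (((Icc 2 (⌊x⌋₊ / q)).filter fun m => m.primeFactors.card = ν + 1).card : ℝ) ≤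
              K * x * D ^ ν / (Nat.factorial ν) * (1 / (q * Real.log (x / q))) := by
          intro q hq
          simp only [mem_filter, mem_Ioc] at hq
          have hq0 : (0 : ℝ) < q := by exact_mod_cast hq.1.1
          have hqq : (q : ℝ) * q ≤ x := by
            have h1 : q * q ≤ ⌊x⌋₊ := Nat.le_sqrt.1 hq.1.2
            have h2 := Nat.floor_le hx0.le
            have h3 : ((q * q : ℕ) : ℝ) ≤ ⌊x⌋₊ := by exact_mod_cast h1
            push_cast at h3
            linarith
          have hq1 : (1 : ℝ) ≤ q := by exact_mod_cast hq.1.1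
          have hq2 : (2 : ℝ) ≤ q := by exact_mod_cast hq.2.two_le
          have hxq : 2 ≤ x / q := by rw [le_div_iff₀ hq0]; nlinarith
          have hxq' : x / q ≤ x := div_le_self hx0.le hq1
          have hlq : 0 < Real.log (x / q) := Real.log_pos (by linarith)
          have hDq := hnn _ hxq
          have hDD : Real.log (Real.log (x / q)) + C ≤ D := by
            have := Real.log_le_log hlq (Real.log_le_log (by linarith) hxq')
            linarith
          have h := ih (x / q) hxq
          rw [Nat.floor_div_natCast] at h
          calc _ ≤ _ := h
            _ ≤ K * (x / q) / Real.log (x / q) * D ^ ν / (Nat.factorial ν) := by gcongr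
            _ = _ := by field_simp
        have h2 : ((ν + 1 : ℕ) : ℝ) * T ≤ ∑ q ∈ (Ioc 0 (Nat.sqrt ⌊x⌋₊)).filter IsPrimePow,
            (((Icc 2 (⌊x⌋₊ / q)).filter fun m => m.primeFactors.card = ν + 1).card : ℝ) := by
          exact_mod_cast hcount
        refine h2.trans ((sum_le_sum hterm).trans ?_)
        rw [← mul_sum]
        calc _ ≤ K * x * D ^ ν / (Nat.factorial ν) * (D / Real.log x) := by
              gcongr
              exact hsum x hx4
          _ = _ := by rw [pow_succ]; field_simp
    rw [Nat.factorial_succ, Nat.cast_mul]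
    have hν : (0 : ℝ) < ((ν + 1 : ℕ) : ℝ) := by positivity
    calc (T : ℝ) = ((ν + 1 : ℕ) : ℝ) * T / ((ν + 1 : ℕ) : ℝ) := by field_simp
      _ ≤ K * x / Real.log x * D ^ (ν + 1) / (Nat.factorial ν) / ((ν + 1 : ℕ) : ℝ) := by gcongr
      _ = _ := by rw [div_div, mul_comm ((Nat.factorial ν : ℕ) : ℝ)]

end HardyRamanujan

/-- For a positive integer `m`, `ω m` is the number of distinct prime divisors of `m`.
There exist absolute constants `C, K > 0` such that for every `ν : ℕ` and real `x ≥ 3`,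
the number of integers `2 ≤ m ≤ x` with `ω m = ν + 1` is at most
`(K·x/log x)·(log log x + C)^ν / ν!`. -/
theorem stmt0 :
    ∃ C : ℝ, 0 < C ∧ ∃ K : ℝ, 0 < K ∧ ∀ (ν : ℕ) (x : ℝ), 3 ≤ x →
      (((Finset.Icc 2 ⌊x⌋₊).filter fun m => m.primeFactors.card = ν + 1).card : ℝ) ≤
        K * x / Real.log x * (Real.log (Real.log x) + C) ^ ν / (Nat.factorial ν) := by
  obtain ⟨C, hC, K, hK, h⟩ := HardyRamanujan.card_le
  exact ⟨C, hC, K, hK, fun ν x hx => h ν x (by linarith)⟩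
end

section
/- There exists an absolute constant H > 0 such that for every integer N ≥ 16 and every integer n ≥ 1, the number of integers m with 1 ≤ m ≤ N and ω(m) = n is at most H·N/√(log log N). -/
/-!
The proof goes through the Hardy–Ramanujan inequality
`#{m ≤ N : ω(m) = k + 1} ≪ (N / log N) (1 + (log log N + D) ^ k / k!)`.

Multiply the count by `log N` and write `log N = log m + log (N / m)`. The second part sums to at
most `N`. For the first, `log m` is the sum of `log q` over the prime powers `q` exactly dividing `m`.
Exchanging the order of summation, each cofactor `a = m / q` has `ω(a) = k` and by Chebyshev's bound
receives total weight `O(N / a)` (`card_mul_log_le`). What remains is the sum of `1 / a` over `a ≤ N`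
with `ω(a) = k`, which is at most `P ^ k / k!`, where `P` is the sum of `1 / q` over prime powers `q ≤ N`
(`sum_one_div_omegaLevel_le`). Both steps rest on the splitting `sum_peel_le`.

The upper half of Mertens' theorem gives `P ≤ log log N + D` (`exists_sum_primePow_le`), derived here
from `∑ Λ(n) ⌊N / n⌋ = log N!` by partial summation. With `x = log log N + D`, the Poisson bound
`x ^ k / k! ≤ exp x / √x` (`pow_div_factorial_le`) is uniform in `k`, and `exp x = e ^ D log N` cancels
the factor `log N`, leaving `N / √(log log N)`.
-/

/-! ### Mertens-type upper bounds -/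

open ArithmeticFunction in
/-- Half of Mertens' first theorem: the identity `∑ Λ(n) ⌊N / n⌋ = log N!`, where removing the
floors costs at most `ψ(N) = O(N)`. -/
theorem sum_vonMangoldt_div_le (N : ℕ) (hN : 1 ≤ N) :
    ∑ n ∈ Finset.Ioc 0 N, vonMangoldt n / n ≤ Real.log N + (Real.log 4 + 4) := by
  have hN0 : (0 : ℝ) < N := by exact_mod_cast hN
  have h1 : ∑ n ∈ Finset.Ioc 0 N, vonMangoldt n * ((N / n : ℕ) : ℝ) ≤ N * Real.log N := by
    rw [← sum_Ioc_mul_zeta_eq_sum, vonMangoldt_mul_zeta]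
    calc _ ≤ ∑ n ∈ Finset.Ioc 0 N, Real.log N := by
          refine Finset.sum_le_sum fun n hn => ?_
          rw [Finset.mem_Ioc] at hn
          rw [log_apply]
          exact Real.log_le_log (by exact_mod_cast hn.1) (by exact_mod_cast hn.2)
      _ = _ := by simp
  have h2 : ∑ n ∈ Finset.Ioc 0 N, vonMangoldt n ≤ (Real.log 4 + 4) * N := by
    have := Chebyshev.psi_le_const_mul_self (x := N) hN0.le
    simpa [Chebyshev.psi] using this
  have h3 : N * ∑ n ∈ Finset.Ioc 0 N, vonMangoldt n / n ≤
      ∑ n ∈ Finset.Ioc 0 N, vonMangoldt n * ((N / n : ℕ) : ℝ) +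
        ∑ n ∈ Finset.Ioc 0 N, vonMangoldt n := by
    rw [Finset.mul_sum, ← Finset.sum_add_distrib]
    refine Finset.sum_le_sum fun n hn => ?_
    rw [← Nat.floor_div_eq_div (K := ℝ)]
    have := (Nat.lt_floor_add_one ((N : ℝ) / n)).le
    calc (N : ℝ) * (vonMangoldt n / n) = vonMangoldt n * (N / n) := by ring
      _ ≤ vonMangoldt n * (⌊(N : ℝ) / n⌋₊ + 1) := by
          gcongr
      _ = _ := by ring
  refine le_of_mul_le_mul_left ?_ hN0
  linarith

open ArithmeticFunction in
/-- Partial summation from `sum_vonMangoldt_div_le`, organised as an induction on `N`; the leading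
constant of `log log N` is the sharp value `1`. -/
theorem exists_sum_vonMangoldt_div_log_le : ∃ D : ℝ, ∀ N : ℕ, 2 ≤ N →
    ∑ n ∈ Finset.Ioc 0 N, vonMangoldt n / (n * Real.log n) ≤ Real.log (Real.log N) + D := by
  set C : ℝ := Real.log 4 + 4
  have hlog2 : 0 < Real.log 2 := Real.log_pos one_lt_two
  -- The increment of the left side minus its boundary term is `A(N) (1 / log N - 1 / log (N + 1))`;
  -- the term `- C / log N` absorbs the part of it coming from the constant `C`.
  have key : ∀ N : ℕ, 2 ≤ N → ∑ n ∈ Finset.Ioc 0 N, vonMangoldt n / (n * Real.log n) ≤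
      (∑ n ∈ Finset.Ioc 0 N, vonMangoldt n / n) / Real.log N + Real.log (Real.log N)
        - C / Real.log N + (C / Real.log 2 - Real.log (Real.log 2)) := by
    intro N hN
    induction N, hN using Nat.le_induction with
    | base =>
      apply le_of_eq
      simp [Finset.sum_Ioc_succ_top]
      field_simp
    | succ N hN ih =>
      rw [Finset.sum_Ioc_succ_top (by omega), Finset.sum_Ioc_succ_top (by omega)]
      have hA := sum_vonMangoldt_div_le N (by omega)
      set A := ∑ n ∈ Finset.Ioc 0 N, vonMangoldt n / n
      have hN1 : (1 : ℝ) < N := by exact_mod_cast hN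
      have hl : 0 < Real.log N := Real.log_pos hN1
      have hll : Real.log N ≤ Real.log (N + 1 : ℕ) :=
        Real.log_le_log (by linarith) (by push_cast; linarith)
      set l := Real.log N
      set l' := Real.log (N + 1 : ℕ)
      have hl' : 0 < l' := hl.trans_le hll
      -- `1 - 1 / t ≤ log t` at `t = l' / l` makes the main term telescope to `log log N`.
      have h1 : 1 - l / l' ≤ Real.log l' - Real.log l := by
        have := Real.log_le_sub_one_of_pos (div_pos hl hl')
        rw [Real.log_div hl.ne' hl'.ne'] at this
        linarith
      have h2 : A * (1 / l - 1 / l') ≤ (l + C) * (1 / l - 1 / l') := by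
        gcongr
        exact sub_nonneg.2 (one_div_le_one_div_of_le hl hll)
      have h3 : (l + C) * (1 / l - 1 / l') = 1 - l / l' + C / l - C / l' := by
        field_simp
        ring
      have h4 : (A + vonMangoldt (N + 1) / (N + 1 : ℕ)) / l' =
          A / l - A * (1 / l - 1 / l') + vonMangoldt (N + 1) / ((N + 1 : ℕ) * l') := by
        field_simp; ring
      rw [h4]
      linarith
  refine ⟨1 + (C / Real.log 2 - Real.log (Real.log 2)), fun N hN => ?_⟩
  have hN1 : (1 : ℝ) < N := by exact_mod_cast hN
  have hl : 0 < Real.log N := Real.log_pos hN1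
  have h1 := key N hN
  have h2 : (∑ n ∈ Finset.Ioc 0 N, vonMangoldt n / n) / Real.log N ≤ 1 + C / Real.log N := by
    rw [div_le_iff₀ hl, add_mul, div_mul_cancel₀ _ hl.ne', one_mul]
    exact sum_vonMangoldt_div_le N (by omega)
  linarith

/-- The term `n = 1` is `1 / 0 = 0`, so the sum effectively starts at `n = 2`. -/
theorem sum_one_div_mul_pred_le (N : ℕ) (hN : 1 ≤ N) :
    ∑ n ∈ Finset.Ioc 0 N, 1 / ((n : ℝ) * (n - 1)) ≤ 1 - 1 / N := by
  induction N, hN using Nat.le_induction with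
  | base => simp
  | succ N hN ih =>
    rw [Finset.sum_Ioc_succ_top (by omega)]
    have : (0 : ℝ) < N := by exact_mod_cast hN
    have h : 1 / (((N + 1 : ℕ) : ℝ) * ((N + 1 : ℕ) - 1)) = 1 / N - 1 / (N + 1 : ℕ) := by
      push_cast
      rw [add_sub_cancel_right]
      field_simp
      ring
    linarith

/-- The prime powers `p ^ a`, `a ≥ 1`, in the interval `[1, x]`. -/
def primePowersUpTo (x : ℕ) : Finset ℕ := (Finset.Icc 1 x).filter IsPrimePow

/-- The powers of a single prime form a geometric series. -/
theorem sum_primePow_fiber_le (N p : ℕ) (hp : p.Prime) :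
    ∑ q ∈ primePowersUpTo N with q.minFac = p, 1 / (q : ℝ) ≤ 1 / ((p : ℝ) - 1) := by
  have hp2 : (1 : ℝ) < p := by exact_mod_cast hp.one_lt
  have hsub : (primePowersUpTo N).filter (fun q => q.minFac = p) ⊆
      (Finset.range N).image (fun a => p ^ (a + 1)) := by
    intro q hq
    simp only [primePowersUpTo, Finset.mem_filter, Finset.mem_Icc] at hq
    obtain ⟨⟨⟨_, hqN⟩, hpp⟩, hmin⟩ := hq
    obtain ⟨r, a, hr, ha, rfl⟩ := (isPrimePow_nat_iff _).1 hpp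
    rw [hr.pow_minFac ha.ne'] at hmin
    subst hmin
    have := (Nat.lt_pow_self hr.one_lt : a < r ^ a)
    simp only [Finset.mem_image, Finset.mem_range]
    exact ⟨a - 1, by omega, by congr 1; omega⟩
  have hx : (1 : ℝ) - 1 / p > 0 := by
    have : 1 / (p : ℝ) < 1 := by rw [div_lt_one (by linarith)]; exact hp2
    linarith
  calc _ ≤ ∑ q ∈ (Finset.range N).image (fun a => p ^ (a + 1)), 1 / (q : ℝ) :=
        Finset.sum_le_sum_of_subset_of_nonneg hsub fun _ _ _ => by positivity
    _ = ∑ a ∈ Finset.range N, 1 / ((p ^ (a + 1) : ℕ) : ℝ) := by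
        apply Finset.sum_image
        intro a _ b _ h
        have := Nat.pow_right_injective hp.two_le h
        omega
    _ = (1 / (p : ℝ)) * ∑ a ∈ Finset.range N, (1 / (p : ℝ)) ^ a := by
        rw [Finset.mul_sum]
        refine Finset.sum_congr rfl fun a _ => ?_
        push_cast
        rw [← pow_succ', one_div_pow]
    _ ≤ (1 / (p : ℝ)) * (1 / (1 - 1 / p)) := by
        gcongr
        rw [le_div_iff₀ hx, geom_sum_mul_neg]
        have : 0 ≤ (1 / (p : ℝ)) ^ N := by positivity
        linarith
    _ = _ := by
        have : (p : ℝ) - 1 ≠ 0 := by linarith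
        field_simp

/-- Half of Mertens' second theorem, for prime powers. Grouping by the base reduces it to the sum of
`1 / (p - 1) = 1 / p + 1 / (p (p - 1))` over primes. The constant `1` in front of `log log N` matters,
since the exponential of this bound must be `O(log N)`. -/
theorem exists_sum_primePow_le : ∃ D : ℝ, 0 ≤ D ∧ ∀ N : ℕ, 2 ≤ N →
    ∑ q ∈ primePowersUpTo N, 1 / (q : ℝ) ≤ Real.log (Real.log N) + D := by
  obtain ⟨D, hD⟩ := exists_sum_vonMangoldt_div_log_le
  refine ⟨max (D + 1) 0, le_max_right _ _, fun N hN => ?_⟩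
  have hmaps : ∀ q ∈ primePowersUpTo N, q.minFac ∈ (Finset.Ioc 0 N).filter Nat.Prime := by
    intro q hq
    simp only [primePowersUpTo, Finset.mem_filter, Finset.mem_Icc] at hq
    simp only [Finset.mem_filter, Finset.mem_Ioc]
    exact ⟨⟨Nat.minFac_pos q, (Nat.minFac_le hq.1.1).trans hq.1.2⟩,
      Nat.minFac_prime hq.2.ne_one⟩
  rw [← Finset.sum_fiberwise_of_maps_to hmaps]
  calc _ ≤ ∑ p ∈ Finset.Ioc 0 N with p.Prime,
        (ArithmeticFunction.vonMangoldt p / (p * Real.log p) + 1 / ((p : ℝ) * (p - 1))) := by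
        refine Finset.sum_le_sum fun p hp => ?_
        have hpr := (Finset.mem_filter.1 hp).2
        have hp2 : (1 : ℝ) < p := by exact_mod_cast hpr.one_lt
        have hl := Real.log_pos hp2
        refine (sum_primePow_fiber_le N p hpr).trans (le_of_eq ?_)
        rw [ArithmeticFunction.vonMangoldt_apply_prime hpr]
        have : (p : ℝ) - 1 ≠ 0 := by linarith
        field_simp
        ring
    _ ≤ ∑ p ∈ Finset.Ioc 0 N,
        (ArithmeticFunction.vonMangoldt p / (p * Real.log p) + 1 / ((p : ℝ) * (p - 1))) := by
        refine Finset.sum_le_sum_of_subset_of_nonneg (Finset.filter_subset _ _) fun p hp _ => ?_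
        have : (1 : ℝ) ≤ p := by exact_mod_cast (Finset.mem_Ioc.1 hp).1
        have h1 := Real.log_nonneg this
        have h2 : (0 : ℝ) ≤ p - 1 := by linarith
        have h3 := ArithmeticFunction.vonMangoldt_nonneg (n := p)
        positivity
    _ ≤ _ := by
        rw [Finset.sum_add_distrib]
        have h1 := hD N hN
        have h2 := sum_one_div_mul_pred_le N (by omega)
        have h3 : 0 ≤ 1 / (N : ℝ) := by positivity
        have h4 := le_max_left (D + 1) 0
        linarith

open ArithmeticFunction in
/-- Chebyshev's bound with weight `log q` on a prime power `q`, instead of the smaller `Λ(q)`. The two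
differ only at proper powers, where `log q ≤ (log x / log 2) Λ(q)` and `∑ Λ(q) = ψ(x) - θ(x) = O(√x)`. -/
theorem exists_sum_log_primePow_le : ∃ C : ℝ, 0 < C ∧ ∀ x : ℕ,
    ∑ q ∈ primePowersUpTo x, Real.log q ≤ C * x := by
  obtain ⟨C, hC⟩ := Chebyshev.psi_sub_theta_le_mul_sqrt
  have hlog2 : 0 < Real.log 2 := Real.log_pos one_lt_two
  have hlog4 : 0 < Real.log 4 := Real.log_pos (by norm_num)
  refine ⟨Real.log 4 + 2 / Real.log 2 * |C|, by positivity, fun x => ?_⟩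
  have hlogx : 0 ≤ Real.log x := Real.log_natCast_nonneg x
  have hθ := Chebyshev.theta_le_log4_mul_x (x := x) (by positivity)
  have hψ := hC x
  rw [Chebyshev.psi_sub_theta_eq_sum_not_prime, Nat.floor_natCast] at hψ
  rw [Chebyshev.theta, Nat.floor_natCast] at hθ
  have hx : Real.log x ≤ 2 * √x := by
    have h1 := Real.log_le_self (Real.sqrt_nonneg (x : ℝ))
    rw [Real.log_sqrt (by positivity)] at h1
    linarith
  have h1 : ∑ q ∈ primePowersUpTo x, Real.log q ≤ ∑ n ∈ Finset.Ioc 0 x with n.Prime, Real.log n +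
      Real.log x / Real.log 2 * ∑ n ∈ Finset.Ioc 0 x with ¬ n.Prime, vonMangoldt n := by
    have : primePowersUpTo x = (Finset.Ioc 0 x).filter IsPrimePow := by
      rw [primePowersUpTo]; rfl
    rw [this, Finset.sum_filter, Finset.sum_filter, Finset.sum_filter, Finset.mul_sum,
      ← Finset.sum_add_distrib]
    refine Finset.sum_le_sum fun n hn => ?_
    rw [Finset.mem_Ioc] at hn
    have hn0 : 0 ≤ Real.log n := Real.log_natCast_nonneg n
    by_cases hp : n.Prime
    · simp [hp, hp.isPrimePow]
    · by_cases hpp : IsPrimePow n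
      · have h2 : Real.log 2 ≤ vonMangoldt n := by
          rw [vonMangoldt_apply, if_pos hpp]
          exact Real.log_le_log two_pos
            (by exact_mod_cast (Nat.minFac_prime hpp.ne_one).two_le)
        have h3 : Real.log n ≤ Real.log x :=
          Real.log_le_log (by exact_mod_cast hn.1) (by exact_mod_cast hn.2)
        simp only [hpp, hp, if_true, if_false, not_false_eq_true, zero_add]
        calc Real.log n ≤ Real.log x := h3
          _ = Real.log x / Real.log 2 * Real.log 2 := by field_simp
          _ ≤ _ := by gcongr
      · simp only [hpp, hp, if_false, not_false_eq_true, if_true, zero_add]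
        have := vonMangoldt_nonneg (n := n)
        positivity
  have h2 : Real.log x / Real.log 2 * ∑ n ∈ Finset.Ioc 0 x with ¬ n.Prime, vonMangoldt n ≤
      (2 * √x) / Real.log 2 * (|C| * √x) := by
    gcongr
    exact hψ.trans (by gcongr; exact le_abs_self C)
  have h3 : (2 * √x) / Real.log 2 * (|C| * √x) = 2 / Real.log 2 * |C| * x := by
    have := Real.mul_self_sqrt (Nat.cast_nonneg (α := ℝ) x)
    linear_combination 2 / Real.log 2 * |C| * this
  linarith

/-! ### The Hardy–Ramanujan inequality -/

/-- The integers `1 ≤ m ≤ N` with exactly `k` distinct prime divisors. -/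
def omegaLevel (N k : ℕ) : Finset ℕ :=
  (Finset.Icc 1 N).filter fun m => m.primeFactors.card = k

/-- Splitting a prime power off: `(m, p) ↦ (m / p ^ v, p ^ v)`, with `v` the exponent of `p` in `m`, is
injective, and it lowers the number of prime divisors of the first component by one. -/
theorem sum_peel_le (N k : ℕ) (f : ℕ → ℕ → ℝ) (hf : ∀ a q, 0 ≤ f a q) :
    ∑ m ∈ omegaLevel N (k + 1), ∑ p ∈ m.primeFactors, f (ordCompl[p] m) (ordProj[p] m) ≤
      ∑ a ∈ omegaLevel N k, ∑ q ∈ primePowersUpTo (N / a), f a q := by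
  rw [Finset.sum_sigma', Finset.sum_sigma']
  let g : (Σ _ : ℕ, ℕ) → (Σ _ : ℕ, ℕ) := fun x => ⟨ordCompl[x.2] x.1, ordProj[x.2] x.1⟩
  set s := (omegaLevel N (k + 1)).sigma fun m => m.primeFactors
  have hs : ∀ m p : ℕ, (⟨m, p⟩ : Σ _ : ℕ, ℕ) ∈ s →
      (1 ≤ m ∧ m ≤ N ∧ m.primeFactors.card = k + 1) ∧ p.Prime ∧ p ∣ m := by
    intro m p h
    simp only [s, Finset.mem_sigma, omegaLevel, Finset.mem_filter, Finset.mem_Icc,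
      Nat.mem_primeFactors] at h
    tauto
  -- The pair determines `m` as the product and `p` as the base of the prime power.
  have hinj : Set.InjOn g s := by
    rintro ⟨m, p⟩ h ⟨m', p'⟩ h' heq
    obtain ⟨⟨h1, h2, h3⟩, hp, hd⟩ := hs m p h
    obtain ⟨⟨h1', h2', h3'⟩, hp', hd'⟩ := hs m' p' h'
    simp only [g, Sigma.mk.injEq, heq_eq_eq] at heq
    have hm : m = m' := by
      rw [← Nat.ordProj_mul_ordCompl_eq_self m p, ← Nat.ordProj_mul_ordCompl_eq_self m' p',
        heq.1, heq.2]
    have hv : m.factorization p ≠ 0 := (hp.factorization_pos_of_dvd (by omega) hd).ne'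
    have hv' : m'.factorization p' ≠ 0 := (hp'.factorization_pos_of_dvd (by omega) hd').ne'
    have hpp : p = p' := by
      rw [← hp.pow_minFac hv, heq.2, hp'.pow_minFac hv']
    rw [hm, hpp]
  have himg : s.image g ⊆
      (omegaLevel N k).sigma fun a => primePowersUpTo (N / a) := by
    intro y hy
    obtain ⟨⟨m, p⟩, h, rfl⟩ := Finset.mem_image.1 hy
    obtain ⟨⟨h1, h2, h3⟩, hp, hd⟩ := hs m p h
    have hm0 : m ≠ 0 := by omega
    have hv : m.factorization p ≠ 0 := (hp.factorization_pos_of_dvd hm0 hd).ne'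
    have hpos : 0 < ordCompl[p] m := Nat.ordCompl_pos p hm0
    simp only [g, Finset.mem_sigma, omegaLevel, primePowersUpTo, Finset.mem_filter, Finset.mem_Icc]
    refine ⟨⟨⟨hpos, (Nat.ordCompl_le m p).trans h2⟩, ?_⟩, ⟨?_, ?_⟩, hp.isPrimePow.pow hv⟩
    · rw [← Nat.support_factorization, Nat.factorization_ordCompl, Finsupp.support_erase,
        Nat.support_factorization, Finset.card_erase_of_mem, h3, Nat.add_sub_cancel]
      exact Nat.mem_primeFactors.2 ⟨hp, hd, hm0⟩
    · exact Nat.ordProj_pos m p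
    · rw [Nat.le_div_iff_mul_le hpos, Nat.ordProj_mul_ordCompl_eq_self]
      exact h2
  calc _ = ∑ y ∈ s.image g, f y.1 y.2 := (Finset.sum_image (f := fun y => f y.1 y.2) hinj).symm
    _ ≤ _ := Finset.sum_le_sum_of_subset_of_nonneg himg fun _ _ _ => hf _ _

/-- By induction on `k`: weighting each `m` by its `k + 1` prime divisors and splitting off the
corresponding prime power gives one more factor of the prime power sum. -/
theorem sum_one_div_omegaLevel_le (N k : ℕ) :
    ∑ m ∈ omegaLevel N k, 1 / (m : ℝ) ≤
      (∑ q ∈ primePowersUpTo N, 1 / (q : ℝ)) ^ k / k.factorial := by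
  induction k with
  | zero =>
    have : omegaLevel N 0 ⊆ {1} := by
      intro m hm
      simp only [omegaLevel, Finset.mem_filter, Finset.mem_Icc, Finset.card_eq_zero,
        Nat.primeFactors_eq_empty] at hm
      simp; omega
    calc _ ≤ ∑ m ∈ ({1} : Finset ℕ), 1 / (m : ℝ) :=
          Finset.sum_le_sum_of_subset_of_nonneg this fun _ _ _ => by positivity
      _ = _ := by simp
  | succ k ih =>
    set P := ∑ q ∈ primePowersUpTo N, 1 / (q : ℝ)
    have hP : 0 ≤ P := Finset.sum_nonneg fun _ _ => by positivity
    have h1 : (k + 1) * ∑ m ∈ omegaLevel N (k + 1), 1 / (m : ℝ) =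
        ∑ m ∈ omegaLevel N (k + 1), ∑ p ∈ m.primeFactors,
          1 / ((ordCompl[p] m : ℕ) : ℝ) * (1 / ((ordProj[p] m : ℕ) : ℝ)) := by
      rw [Finset.mul_sum]
      refine Finset.sum_congr rfl fun m hm => ?_
      have hc : m.primeFactors.card = k + 1 := (Finset.mem_filter.1 hm).2
      have : ∀ p ∈ m.primeFactors, 1 / ((ordCompl[p] m : ℕ) : ℝ) * (1 / ((ordProj[p] m : ℕ) : ℝ))
          = 1 / (m : ℝ) := by
        intro p _
        rw [one_div_mul_one_div, ← Nat.cast_mul, mul_comm, Nat.ordProj_mul_ordCompl_eq_self]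
      rw [Finset.sum_congr rfl this, Finset.sum_const, hc]
      simp
    have h2 := sum_peel_le N k (fun a q => 1 / (a : ℝ) * (1 / (q : ℝ)))
      fun _ _ => by positivity
    have h3 : ∑ a ∈ omegaLevel N k, ∑ q ∈ primePowersUpTo (N / a), 1 / (a : ℝ) * (1 / (q : ℝ)) ≤
        (∑ a ∈ omegaLevel N k, 1 / (a : ℝ)) * P := by
      rw [Finset.sum_mul]
      refine Finset.sum_le_sum fun a _ => ?_
      rw [← Finset.mul_sum]
      gcongr
      refine Finset.sum_le_sum_of_subset_of_nonneg ?_ fun _ _ _ => by positivity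
      exact Finset.filter_subset_filter _ (Finset.Icc_subset_Icc_right (Nat.div_le_self _ _))
    have h4 : (∑ a ∈ omegaLevel N k, 1 / (a : ℝ)) * P ≤ P ^ k / k.factorial * P := by gcongr
    have h5 : P ^ (k + 1) / ((k + 1).factorial : ℝ) = P ^ k / k.factorial * P / (k + 1) := by
      rw [Nat.factorial_succ, pow_succ]; push_cast; field_simp
    rw [h5, le_div_iff₀ (by positivity)]
    linarith

/-- This is `N ^ N / N! ≤ exp N`, after taking logarithms. -/
theorem sum_log_div_le (N : ℕ) : ∑ m ∈ Finset.Icc 1 N, (Real.log N - Real.log m) ≤ N := by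
  rcases Nat.eq_zero_or_pos N with rfl | hN
  · simp
  have hN0 : (0 : ℝ) < N := by exact_mod_cast hN
  have h1 : ∑ m ∈ Finset.Icc 1 N, Real.log m = Real.log (N.factorial) := by
    clear hN hN0
    induction N with
    | zero => simp
    | succ N ih =>
      rw [Finset.sum_Icc_succ_top (by omega), ih, Nat.factorial_succ, Nat.cast_mul,
        Real.log_mul (by positivity) (by positivity), add_comm]
  have h2 := Real.log_le_log (by positivity) (Real.pow_div_factorial_le_exp N hN0.le N)
  rw [Real.log_exp, Real.log_div (by positivity) (by positivity), Real.log_pow] at h2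
  rw [Finset.sum_sub_distrib, h1]
  simpa using h2

/-- Write `log N = log m + log (N / m)`. The second part contributes at most `N` in total. The first is
the sum of the logarithms of the prime powers exactly dividing `m`; splitting these off and
applying `hC` with `x = N / a` to each cofactor `a` leaves the harmonic sum one level down. -/
theorem card_mul_log_le {C : ℝ}
    (hC : ∀ x : ℕ, ∑ q ∈ primePowersUpTo x, Real.log q ≤ C * x) (hC0 : 0 ≤ C) (N k : ℕ) :
    ((omegaLevel N (k + 1)).card : ℝ) * Real.log N ≤
      C * N * ∑ m ∈ omegaLevel N k, 1 / (m : ℝ) + N := by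
  have h1 : ((omegaLevel N (k + 1)).card : ℝ) * Real.log N =
      ∑ m ∈ omegaLevel N (k + 1), Real.log m +
        ∑ m ∈ omegaLevel N (k + 1), (Real.log N - Real.log m) := by
    rw [← Finset.sum_add_distrib]; simp
  have h2 : ∑ m ∈ omegaLevel N (k + 1), (Real.log N - Real.log m) ≤ N := by
    refine (Finset.sum_le_sum_of_subset_of_nonneg (Finset.filter_subset _ _) ?_).trans
      (sum_log_div_le N)
    intro m hm _
    rw [Finset.mem_Icc] at hm
    exact sub_nonneg.2 (Real.log_le_log (by exact_mod_cast hm.1) (by exact_mod_cast hm.2))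
  have h3 : ∑ m ∈ omegaLevel N (k + 1), Real.log m =
      ∑ m ∈ omegaLevel N (k + 1), ∑ p ∈ m.primeFactors, Real.log (ordProj[p] m : ℕ) := by
    refine Finset.sum_congr rfl fun m _ => ?_
    rw [Real.log_nat_eq_sum_factorization, Finsupp.sum, Nat.support_factorization]
    refine Finset.sum_congr rfl fun p _ => ?_
    rw [Nat.cast_pow, Real.log_pow]
  have h4 := sum_peel_le N k (fun _ q => Real.log q) fun _ q => Real.log_natCast_nonneg q
  have h5 : ∑ a ∈ omegaLevel N k, ∑ q ∈ primePowersUpTo (N / a), Real.log q ≤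
      C * N * ∑ m ∈ omegaLevel N k, 1 / (m : ℝ) := by
    rw [Finset.mul_sum]
    refine Finset.sum_le_sum fun a _ => (hC _).trans ?_
    calc C * ((N / a : ℕ) : ℝ) ≤ C * ((N : ℝ) / a) := by gcongr; exact Nat.cast_div_le
      _ = _ := by ring
  linarith

/-! ### The largest Poisson probability -/

/-- The terms `x ^ k / k!` increase up to `k = ⌊x⌋`. -/
theorem pow_div_factorial_le_of_le {x : ℝ} {k K : ℕ} (hk : k ≤ K) (hK : K ≤ x) :
    x ^ k / k.factorial ≤ x ^ K / K.factorial := by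
  induction K, hk using Nat.le_induction with
  | base => rfl
  | succ K hkK ih =>
    push_cast at hK
    refine (ih (by linarith)).trans ?_
    have hx : 0 ≤ x := by have : (0 : ℝ) ≤ K := by positivity
                          linarith
    have h : x ^ (K + 1) / ((K + 1).factorial : ℝ) = x ^ K / K.factorial * (x / (K + 1)) := by
      rw [Nat.factorial_succ, pow_succ]; push_cast; field_simp
    rw [h]
    refine le_mul_of_one_le_right (by positivity) ?_
    rw [one_le_div (by positivity)]
    exact hK

/-- Stirling's lower bound on `k!` together with `(e x / k) ^ k ≤ exp x`. The hypothesis turns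
`√(2 π k)` into `√x`. -/
theorem pow_div_factorial_le_of_le_two_mul {x : ℝ} (hx : 1 ≤ x) {k : ℕ} (hk : x ≤ 2 * k) :
    x ^ k / k.factorial ≤ Real.exp x / √x := by
  have hk0 : (0 : ℝ) < k := by linarith
  have h1 : (x / k * Real.exp 1) ^ k ≤ Real.exp x := by
    have h : x / k * Real.exp 1 ≤ Real.exp (x / k) := by
      have := Real.add_one_le_exp (x / k - 1)
      rw [Real.exp_sub, le_div_iff₀ (Real.exp_pos 1)] at this
      linarith
    calc _ ≤ Real.exp (x / k) ^ k := by gcongr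
      _ = Real.exp x := by rw [← Real.exp_nat_mul]; congr 1; field_simp
  have h2 : √x ≤ √(2 * Real.pi * k) := by
    apply Real.sqrt_le_sqrt
    nlinarith [Real.pi_gt_three]
  have hf := Stirling.le_factorial_stirling k
  have hsx : 0 < √x := Real.sqrt_pos.2 (by linarith)
  calc x ^ k / k.factorial ≤ x ^ k / (√x * (k / Real.exp 1) ^ k) := by
        gcongr
        refine le_trans ?_ hf
        gcongr
    _ = (x / k * Real.exp 1) ^ k / √x := by
        rw [mul_pow, div_pow, div_pow]; field_simp
    _ ≤ _ := by gcongr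

/-- No value of a Poisson variable of parameter `x` has probability above `1 / √x`. For `k < ⌊x⌋` the
bound at `⌊x⌋` is used. -/
theorem pow_div_factorial_le {x : ℝ} (hx : 1 ≤ x) (k : ℕ) :
    x ^ k / k.factorial ≤ Real.exp x / √x := by
  have h0 : 0 ≤ x := by linarith
  have hfl : (1 : ℝ) ≤ ⌊x⌋₊ := by exact_mod_cast (Nat.one_le_floor_iff x).2 hx
  have hfl' : x ≤ 2 * (⌊x⌋₊ : ℝ) := by linarith [Nat.lt_floor_add_one x]
  rcases le_total k ⌊x⌋₊ with h | h
  · exact (pow_div_factorial_le_of_le h (Nat.floor_le h0)).trans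
      (pow_div_factorial_le_of_le_two_mul hx hfl')
  · refine pow_div_factorial_le_of_le_two_mul hx (hfl'.trans ?_)
    gcongr

/-! ### Conclusion -/
theorem one_le_log_log {N : ℕ} (hN : 16 ≤ N) : 1 ≤ Real.log (Real.log N) := by
  have h1 : 4 * Real.log 2 ≤ Real.log N := by
    have : Real.log ((2 : ℝ) ^ 4) = 4 * Real.log 2 := by rw [Real.log_pow]; norm_num
    rw [← this]
    exact Real.log_le_log (by norm_num) (by norm_num; exact_mod_cast hN)
  have h2 := Real.log_two_gt_d9
  have h3 := Real.exp_one_lt_d9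
  rw [Real.le_log_iff_exp_le (by linarith)]
  linarith


/-- There exists an absolute constant `H > 0` such that for every integer `N ≥ 16` and
every integer `n ≥ 1`, the number of integers `1 ≤ m ≤ N` with `ω m = n` (where `ω m` is
the number of distinct prime divisors of `m`) is at most `H·N/√(log log N)`. -/
theorem stmt1 :
    ∃ H : ℝ, 0 < H ∧ ∀ N : ℕ, 16 ≤ N → ∀ n : ℕ, 1 ≤ n →
      (((Finset.Icc 1 N).filter fun m => m.primeFactors.card = n).card : ℝ) ≤
        H * N / Real.sqrt (Real.log (Real.log N)) := by
  obtain ⟨D, hD0, hD⟩ := exists_sum_primePow_le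
  obtain ⟨C, hC0, hC⟩ := exists_sum_log_primePow_le
  refine ⟨C * Real.exp D + 1, by positivity, fun N hN n hn => ?_⟩
  obtain ⟨k, rfl⟩ : ∃ k, n = k + 1 := ⟨n - 1, by omega⟩
  have hcount := card_mul_log_le hC hC0.le N k
  change ((omegaLevel N (k + 1)).card : ℝ) ≤ _
  set L := Real.log (Real.log N)
  have hL : 1 ≤ L := one_le_log_log hN
  have hN1 : (1 : ℝ) < N := by exact_mod_cast (by omega : 1 < N)
  have hlogN : 0 < Real.log N := Real.log_pos hN1
  have hexpL : Real.exp L = Real.log N := Real.exp_log hlogN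
  have hsL : 0 < √L := Real.sqrt_pos.2 (by linarith)
  have hS : ∑ m ∈ omegaLevel N k, 1 / (m : ℝ) ≤ Real.exp D * Real.log N / √L := by
    calc _ ≤ (∑ q ∈ primePowersUpTo N, 1 / (q : ℝ)) ^ k / k.factorial :=
          sum_one_div_omegaLevel_le N k
      _ ≤ (L + D) ^ k / k.factorial := by
          gcongr
          exact hD N (by omega)
      _ ≤ Real.exp (L + D) / √(L + D) := pow_div_factorial_le (by linarith) k
      _ ≤ Real.exp (L + D) / √L := by
          gcongr
          linarith
      _ = _ := by rw [Real.exp_add, hexpL, mul_comm]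
  -- The error term `N / log N` is also at most `N / √L`.
  have hone : 1 ≤ Real.log N / √L := by
    rw [one_le_div hsL, ← hexpL]
    have h1 : √L ≤ L := (Real.sqrt_le_left (by linarith)).2 (by nlinarith)
    linarith [Real.add_one_le_exp L]
  refine le_of_mul_le_mul_right ?_ hlogN
  calc _ ≤ C * N * ∑ m ∈ omegaLevel N k, 1 / (m : ℝ) + N := hcount
    _ ≤ C * N * (Real.exp D * Real.log N / √L) + N * (Real.log N / √L) := by
        gcongr
        exact le_mul_of_one_le_right (by positivity) hone
    _ = _ := by ring
end
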